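/- arXiv:2106.12697 — 6 statements merged into one kernel-verified Lean document; each statement's English description precedes it below -/
import Mathlib

section
/- Let A be a commutative ring such that the maximal spectrum Max(A) is a Noetherian topological space of dimension at most d−2. Then A satisfies the absolute flexible stable rank condition AFSR_d. -/
/-- The game defining absolute flexible stable rank: with `k` turns remaining and
the products `ε·c` chosen so far recorded in `acc`, Player 2 picks `c` and then
Player 1 picks a unit `ε`; Player 2 wins if eventually `final` holds. -/
def afsrPlay {A : Type*} [CommRing A] (final : List A → Prop) : ℕ → List A → Prop
  | 0, acc => final acc
  | k + 1, acc => ∃ c : A, ∀ ε : A, IsUnit ε → afsrPlay final k (acc ++ [ε * c])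

/-- The absolute flexible stable rank condition `AFSR_d`: for every row `b` of length `d`,
Player 2 can successively choose `c_1,…,c_{d-1}` (with a unit `ε_i` chosen adversarially
after each `c_i`) so that every maximal ideal containing
`⟨b_1 + ε_1 c_1 b_d, …, b_{d-1} + ε_{d-1} c_{d-1} b_d⟩` contains `⟨b_1,…,b_d⟩`. -/
def AFSR (A : Type*) [CommRing A] (d : ℕ) : Prop :=
  ∀ b : Fin d → A, ∀ _hd : 0 < d,
    afsrPlay (fun ts =>
      ∀ M : Ideal A, M.IsMaximal →
        Ideal.span {x | ∃ i : Fin (d - 1),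
          x = b ⟨i.val, by omega⟩ + ts.getD i.val 0 * b ⟨d - 1, by omega⟩} ≤ M →
        Ideal.span (Set.range b) ≤ M) (d - 1) []

/-!
Write `e = b_d`. After the units `ε₁, …, ε_k` have been played, the maximal ideals that still
violate the conclusion lie in the locus where `e ∉ M` and `b_i + ε_i c_i e ∈ M` for `i ≤ k`. This
locus is a Noetherian space, so finitely many maximal ideals meet all its irreducible components,
and by the Chinese remainder theorem there is a `c` lying in exactly those of them that do not
contain `b_{k+1}`. Whatever the unit `ε`, none of them contains `b_{k+1} + ε c e`: the next locus
contains no irreducible component of the current one, so the dimension drops by at least one. As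
the dimension starts at most `d - 2`, the locus is empty after `d - 1` turns.
-/

open TopologicalSpace Topology

theorem krullDim_add_one_le_of_strictMono_of_not_isMax {α β : Type*} [Preorder α] [Preorder β]
    {f : α → β} (hf : StrictMono f) (hmax : ∀ a, ¬IsMax (f a)) :
    Order.krullDim α + 1 ≤ Order.krullDim β := by
  cases isEmpty_or_nonempty α
  · simp [Order.krullDim_eq_bot]
  have : Nonempty β := .map f ‹_›
  rw [Order.krullDim_eq_iSup_length, Order.krullDim_eq_iSup_length, ← WithBot.coe_one,
    ← WithBot.coe_add, ENat.iSup_add, WithBot.coe_le_coe, iSup_le_iff]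
  intro l
  obtain ⟨y, hy⟩ := not_isMax_iff.mp (hmax l.last)
  exact le_iSup (fun p : LTSeries β ↦ (p.length : ℕ∞)) ((l.map f hf).snoc y hy)

section Topology

variable {X Y : Type*} [TopologicalSpace X] [TopologicalSpace Y]

theorem isEmpty_of_topologicalKrullDim_eq_bot (h : topologicalKrullDim X = ⊥) : IsEmpty X :=
  have := Order.krullDim_eq_bot_iff.mp h
  ⟨fun x ↦ isEmptyElim
    (⟨closure {x}, isIrreducible_singleton.closure, isClosed_closure⟩ : IrreducibleCloseds X)⟩

theorem topologicalKrullDim_add_one_le_of_isInducing {f : Y → X} (hf : IsInducing f)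
    (hrange : ∀ Z ∈ irreducibleComponents X, ¬Z ⊆ closure (Set.range f)) :
    topologicalKrullDim Y + 1 ≤ topologicalKrullDim X := by
  refine krullDim_add_one_le_of_strictMono_of_not_isMax
    (IrreducibleCloseds.map_strictMono_of_isInducing hf) fun Z hmax ↦ ?_
  obtain ⟨C, hC, hZC⟩ := exists_mem_irreducibleComponents_subset_of_isIrreducible _
    (IrreducibleCloseds.map f hf.continuous Z).isIrreducible
  have hCZ : C ⊆ closure (f '' Z) :=
    hmax (b := ⟨C, hC.1, isClosed_of_mem_irreducibleComponents C hC⟩) hZC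
  exact hrange C hC (hCZ.trans (closure_mono (Set.image_subset_range f Z)))

variable (X) in
theorem exists_finite_meets_irreducibleComponents [NoetherianSpace X] :
    ∃ T : Set X, T.Finite ∧ ∀ Z ∈ irreducibleComponents X, (Z ∩ T).Nonempty := by
  have : Finite (irreducibleComponents X) := NoetherianSpace.finite_irreducibleComponents
  choose x hx using fun Z : irreducibleComponents X ↦ Z.2.1.nonempty
  exact ⟨Set.range x, Set.finite_range x, fun Z hZ ↦ ⟨x ⟨Z, hZ⟩, hx ⟨Z, hZ⟩, Set.mem_range_self _⟩⟩

theorem exists_finite_topologicalKrullDim_inter_add_one_le (S : Set X) [NoetherianSpace S] :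
    ∃ T ⊆ S, T.Finite ∧ ∀ C, IsClosed C → Disjoint T C →
      topologicalKrullDim (S ∩ C : Set X) + 1 ≤ topologicalKrullDim S := by
  obtain ⟨T, hT, hmeets⟩ := exists_finite_meets_irreducibleComponents S
  refine ⟨(↑) '' T, Subtype.coe_image_subset S T, hT.image _, fun C hC hdisj ↦ ?_⟩
  refine topologicalKrullDim_add_one_le_of_isInducing
    (IsEmbedding.inclusion Set.inter_subset_left).isInducing fun Z hZ hsub ↦ ?_
  obtain ⟨x, hxZ, hxT⟩ := hmeets Z hZ
  have hclosure : closure (Set.range (Set.inclusion (Set.inter_subset_left : S ∩ C ⊆ S))) ⊆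
      (↑) ⁻¹' C :=
    closure_minimal (Set.range_subset_iff.mpr fun y ↦ y.2.2) (hC.preimage continuous_subtype_val)
  exact Set.disjoint_left.mp hdisj (Set.mem_image_of_mem _ hxT) (hclosure (hsub hxZ))

end Topology

section MaximalSpectrum

variable {A : Type*} [CommRing A]

theorem isClosed_setOf_mem_asIdeal (a : A) :
    IsClosed {M : MaximalSpectrum A | a ∈ M.asIdeal} := by
  simpa [Set.preimage, MaximalSpectrum.toPrimeSpectrum] using
    (PrimeSpectrum.isClosed_zeroLocus {a}).preimage MaximalSpectrum.toPrimeSpectrum_continuous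

theorem exists_forall_mem_asIdeal_iff {T : Set (MaximalSpectrum A)} (hT : T.Finite)
    (P : MaximalSpectrum A → Prop) : ∃ c : A, ∀ M ∈ T, c ∈ M.asIdeal ↔ P M := by
  classical
  have : Finite T := hT
  obtain ⟨c, hc⟩ := Ideal.exists_forall_sub_mem_ideal (I := fun M : T ↦ M.1.asIdeal)
    (fun _ _ hne ↦ MaximalSpectrum.isCoprime_of_ne (Subtype.coe_ne_coe.mpr hne))
    (fun M ↦ if P M then 0 else 1)
  refine ⟨c, fun M hM ↦ ?_⟩
  have hcM := hc ⟨M, hM⟩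
  by_cases hP : P M
  · simpa [hP] using hcM
  · have hone : (1 : A) ∉ M.asIdeal := M.asIdeal.one_notMem
    simp only [hP, if_false] at hcM
    simpa [hP] using fun h ↦ hone ((Submodule.sub_mem_iff_right _ h).mp hcM)

theorem add_mul_notMem_of_mem_iff_notMem {P : Ideal A} [P.IsPrime] {b c e ε : A}
    (hc : c ∈ P ↔ b ∉ P) (he : e ∉ P) (hε : IsUnit ε) : b + ε * c * e ∉ P := by
  have hterm : ε * c * e ∈ P ↔ c ∈ P := by
    rw [Ideal.IsPrime.mul_mem_iff_mem_or_mem ‹_›, Ideal.unit_mul_mem_iff_mem P hε,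
      or_iff_left he]
  intro hsum
  by_cases hb : b ∈ P
  · exact hc.mp (hterm.mp ((P.add_mem_iff_right hb).mp hsum)) hb
  · exact hb ((P.add_mem_iff_left (hterm.mpr (hc.mpr hb))).mp hsum)

theorem exists_forall_isUnit_topologicalKrullDim_inter_add_one_le
    (S : Set (MaximalSpectrum A)) [NoetherianSpace S] (b : A) {e : A}
    (he : ∀ M ∈ S, e ∉ M.asIdeal) :
    ∃ c : A, ∀ ε : A, IsUnit ε →
      topologicalKrullDim (S ∩ {M | b + ε * c * e ∈ M.asIdeal} : Set (MaximalSpectrum A)) + 1 ≤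
        topologicalKrullDim S := by
  obtain ⟨T, hTS, hT, hdrop⟩ := exists_finite_topologicalKrullDim_inter_add_one_le S
  obtain ⟨c, hc⟩ := exists_forall_mem_asIdeal_iff hT fun M ↦ b ∉ M.asIdeal
  exact ⟨c, fun ε hε ↦ hdrop _ (isClosed_setOf_mem_asIdeal _) <| Set.disjoint_left.mpr
    fun M hM ↦ add_mul_notMem_of_mem_iff_notMem (hc M hM) (he M (hTS hM)) hε⟩

end MaximalSpectrum

section Game

variable {A : Type*} [CommRing A]

theorem afsrPlay_of_invariant {final : List A → Prop} {Inv : ℕ → List A → Prop}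
    (hfinal : ∀ acc, Inv 0 acc → final acc)
    (hturn : ∀ k acc, Inv (k + 1) acc → ∃ c, ∀ ε, IsUnit ε → Inv k (acc ++ [ε * c])) :
    ∀ k acc, Inv k acc → afsrPlay final k acc
  | 0, acc, h => hfinal acc h
  | k + 1, acc, h =>
    let ⟨c, hc⟩ := hturn k acc h
    ⟨c, fun ε hε ↦ afsrPlay_of_invariant hfinal hturn k _ (hc ε hε)⟩

theorem afsrPlay_mono {final final' : List A → Prop} (h : ∀ ts, final ts → final' ts) {k : ℕ}
    {acc : List A} (hplay : afsrPlay final k acc) : afsrPlay final' k acc :=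
  afsrPlay_of_invariant (Inv := afsrPlay final) h (fun _ _ ↦ id) k acc hplay

/-- The maximal ideals that can still refute the conclusion of `AFSR` for the row `(b, e)` once the
products `ts = [ε₁ c₁, …, ε_k c_k]` have been played: they omit `e` but contain the modified entries
`b i + ts[i] * e` for all `i < k`. -/
def residualLocus {n : ℕ} (b : Fin n → A) (e : A) (ts : List A) : Set (MaximalSpectrum A) :=
  {M | e ∉ M.asIdeal ∧ ∀ i : Fin n, i < ts.length → b i + ts.getD i 0 * e ∈ M.asIdeal}

variable {n : ℕ} {b : Fin n → A} {e : A} {ts : List A}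

theorem residualLocus_append_singleton (hts : ts.length < n) (t : A) :
    residualLocus b e (ts ++ [t]) =
      residualLocus b e ts ∩ {M | b ⟨ts.length, hts⟩ + t * e ∈ M.asIdeal} := by
  ext M
  constructor
  · rintro ⟨he, hmem⟩
    refine ⟨⟨he, fun i hi ↦ ?_⟩, ?_⟩
    · simpa only [List.getD_append _ _ _ _ hi] using hmem i (by grind)
    · simpa using hmem ⟨ts.length, hts⟩ (by simp)
  · rintro ⟨⟨he, hmem⟩, hlast⟩
    refine ⟨he, fun i hi ↦ ?_⟩
    rcases Nat.lt_or_ge i ts.length with hlt | hge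
    · simpa only [List.getD_append _ _ _ _ hlt] using hmem i hlt
    · obtain rfl : i = ⟨ts.length, hts⟩ := Fin.ext (by grind)
      simpa using hlast

theorem afsrPlay_residualLocus_eq_empty [NoetherianSpace (MaximalSpectrum A)]
    (b : Fin n → A) (e : A) (hdim : topologicalKrullDim (MaximalSpectrum A) + 1 ≤ n) :
    afsrPlay (fun ts ↦ residualLocus b e ts = ∅) n [] := by
  refine afsrPlay_of_invariant
    (Inv := fun k ts ↦ ts.length + k = n ∧ topologicalKrullDim (residualLocus b e ts) + 1 ≤ k)
    ?_ ?_ n [] ⟨by simp, ?_⟩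
  · rintro ts ⟨-, hts⟩
    rw [Nat.cast_zero, ENat.WithBot.add_one_le_zero_iff] at hts
    exact Set.isEmpty_coe_sort.mp (isEmpty_of_topologicalKrullDim_eq_bot hts)
  · rintro k ts ⟨hlen, hts⟩
    have hlt : ts.length < n := by lia
    rw [Nat.cast_succ, ENat.WithBot.add_le_add_one_right_iff] at hts
    have : NoetherianSpace (residualLocus b e ts) := IsInducing.subtypeVal.noetherianSpace
    obtain ⟨c, hc⟩ := exists_forall_isUnit_topologicalKrullDim_inter_add_one_le
      (residualLocus b e ts) (b ⟨ts.length, hlt⟩) fun _ hM ↦ hM.1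
    refine ⟨c, fun ε hε ↦ ⟨by grind, ?_⟩⟩
    rw [residualLocus_append_singleton hlt]
    exact (hc ε hε).trans hts
  · exact (add_le_add_left (topologicalKrullDim_subspace_le _ _) 1).trans hdim

theorem span_range_le_of_residualLocus_eq_empty {b : Fin (n + 1) → A}
    (hempty : residualLocus (fun i ↦ b i.castSucc) (b (Fin.last n)) ts = ∅)
    {M : Ideal A} (hM : M.IsMaximal)
    (hmem : ∀ i : Fin n, b i.castSucc + ts.getD i 0 * b (Fin.last n) ∈ M) :
    Ideal.span (Set.range b) ≤ M := by
  have hlast : b (Fin.last n) ∈ M := by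
    by_contra hlast
    exact Set.eq_empty_iff_forall_notMem.mp hempty ⟨M, hM⟩ ⟨hlast, fun i _ ↦ hmem i⟩
  refine Ideal.span_le.mpr (Set.range_subset_iff.mpr (Fin.lastCases hlast fun i ↦ ?_))
  exact (M.add_mem_iff_left (M.mul_mem_left _ hlast)).mp (hmem i)

end Game

/-- If the maximal spectrum of `A` is a Noetherian space of dimension at most `d − 2`,
then `A` satisfies the absolute flexible stable rank condition `AFSR_d`. -/
theorem afsr_of_jdim_le
    (A : Type*) [CommRing A] (d : ℕ)
    (hNoeth : TopologicalSpace.NoetherianSpace (MaximalSpectrum A))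
    (hdim : topologicalKrullDim (MaximalSpectrum A) + 2 ≤ (d : WithBot ℕ∞)) :
    AFSR A d := by
  intro b hd
  obtain ⟨n, rfl⟩ := Nat.exists_eq_add_one.mpr hd
  have hdim' : topologicalKrullDim (MaximalSpectrum A) + 1 ≤ n := by
    rwa [← one_add_one_eq_two, ← add_assoc, Nat.cast_succ,
      ENat.WithBot.add_le_add_one_right_iff] at hdim
  refine afsrPlay_mono (fun ts hempty M hM hle ↦ ?_)
    (afsrPlay_residualLocus_eq_empty (fun i ↦ b i.castSucc) (b (Fin.last n)) hdim')
  exact span_range_le_of_residualLocus_eq_empty hempty hM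
    fun i ↦ hle (Ideal.subset_span ⟨i, rfl⟩)
end

section
/- Let A be a commutative ring and S a multiplicative subset of A such that the localization A[S^{−1}] satisfies AFSR_d. Then for every row (b_1,…,b_d) with entries in A[S^{−1}] and every s ∈ S, there exist elements c_1,…,c_{d−1} lying in the image of sA in A[S^{−1}] such that every maximal ideal of A[S^{−1}] containing the ideal ⟨b_1 + c_1 b_d, …, b_{d−1} + c_{d−1} b_d⟩ already contains the ideal ⟨b_1,…,b_d⟩. -/
/-!
Playing as Player 1 in the `AFSR_d` game over `A[S⁻¹]`, answer each fraction `c = a / t` with the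
unit `ε = s t`: the product is `ε c = s a`, so every coefficient recorded at the end of the play
lies in the image of `sA`.
-/

theorem afsrPlay.exists_coeffs_mem {R : Type*} [CommRing R] {T : Set R}
    (hT : ∀ x : R, ∃ ε, IsUnit ε ∧ ε * x ∈ T) {final : List R → Prop} {k : ℕ} {acc : List R}
    (h : afsrPlay final k acc) :
    ∃ c : Fin k → R, (∀ i, c i ∈ T) ∧ final (acc ++ List.ofFn c) := by
  induction k generalizing acc with
  | zero => exact ⟨Fin.elim0, nofun, by simpa [afsrPlay] using h⟩
  | succ k ih =>
    obtain ⟨x, hx⟩ := h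
    obtain ⟨ε, hε, hεx⟩ := hT x
    obtain ⟨c, hc, hfinal⟩ := ih (hx ε hε)
    exact ⟨Fin.cons (ε * x) c, Fin.cases hεx hc, by simpa using hfinal⟩

theorem exists_isUnit_mul_eq_algebraMap_mul {A : Type*} [CommRing A] (S : Submonoid A)
    {B : Type*} [CommRing B] [Algebra A B] [IsLocalization S B] {s : A}
    (hs : IsUnit (algebraMap A B s)) (x : B) :
    ∃ ε : B, IsUnit ε ∧ ∃ a : A, ε * x = algebraMap A B (s * a) := by
  obtain ⟨⟨a, t⟩, hxt⟩ := IsLocalization.surj S x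
  refine ⟨algebraMap A B s * algebraMap A B t, hs.mul (IsLocalization.map_units B t), a, ?_⟩
  rw [map_mul, ← hxt, mul_assoc, mul_comm x]

theorem afsr_localization_coeffs_in_sA_general {R : Type*} [CommRing R] {d : ℕ} (hd : 0 < d)
    (hAFSR : AFSR R d) {T : Set R} (hT : ∀ x : R, ∃ ε, IsUnit ε ∧ ε * x ∈ T) (b : Fin d → R) :
    ∃ c : Fin (d - 1) → R, (∀ i, c i ∈ T) ∧
      ∀ M : Ideal R, M.IsMaximal →
        Ideal.span {x | ∃ i : Fin (d - 1),
          x = b ⟨i.val, by omega⟩ + c i * b ⟨d - 1, by omega⟩} ≤ M →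
        Ideal.span (Set.range b) ≤ M := by
  obtain ⟨c, hcT, hc⟩ := (hAFSR b hd).exists_coeffs_mem hT
  exact ⟨c, hcT, by simpa using hc⟩

/-- Using the `AFSR` condition in a localisation: if `A[S⁻¹]` satisfies `AFSR_d`, then for
any row `(b_1,…,b_d)` over `A[S⁻¹]` and any `s ∈ S` one can choose the correcting
coefficients `c_1,…,c_{d-1}` inside the image of `sA`. -/
theorem afsr_localization_coeffs_in_sA
    (A : Type*) [CommRing A] (S : Submonoid A) (d : ℕ) (hd : 0 < d)
    (hAFSR : AFSR (Localization S) d)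
    (b : Fin d → Localization S) (s : A) (hs : s ∈ S) :
    ∃ c : Fin (d - 1) → Localization S,
      (∀ i, ∃ a : A, c i = algebraMap A (Localization S) (s * a)) ∧
      ∀ M : Ideal (Localization S), M.IsMaximal →
        Ideal.span {x | ∃ i : Fin (d - 1),
          x = b ⟨i.val, by omega⟩ + c i * b ⟨d - 1, by omega⟩} ≤ M →
        Ideal.span (Set.range b) ≤ M := by
  have hs_unit : IsUnit (algebraMap A (Localization S) s) := IsLocalization.map_units _ ⟨s, hs⟩
  exact afsr_localization_coeffs_in_sA_general hd hAFSR
    (T := {x | ∃ a : A, x = algebraMap A (Localization S) (s * a)})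
    (exists_isUnit_mul_eq_algebraMap_mul S hs_unit) b
end

section
/- Let C be a commutative ring and let f ∈ C[x_1,…,x_n] be a lexicographically monic polynomial. Then there exists an invertible change of variables, i.e. a C-algebra automorphism φ of C[x_1,…,x_n] (explicitly given by x_i ↦ y_i + y_n^{K^{n−i}} for i = 1,…,n−1 and x_n ↦ y_n, for any K > deg f), such that φ(f), regarded as a polynomial in x_n with coefficients in C[x_1,…,x_{n−1}], is monic. -/
/-- A multivariate polynomial is lexicographically monic if the coefficient at the
lexicographically largest occurring monomial equals `1` (variables with smaller index
are more significant). -/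
def LexMonic {C : Type*} [CommRing C] {n : ℕ} (f : MvPolynomial (Fin n) C) : Prop :=
  ∃ d : Fin n →₀ ℕ, f.coeff d = 1 ∧ ∀ e : Fin n →₀ ℕ, toLex d < toLex e → f.coeff e = 0

/-- Regard a polynomial in `x_1, …, x_{n+1}` as a polynomial in the last variable `x_{n+1}`
with coefficients in `C[x_1,…,x_n]`. -/
noncomputable def asPolyInLast (C : Type*) [CommRing C] (n : ℕ) :
    MvPolynomial (Fin (n + 1)) C ≃ₐ[C] Polynomial (MvPolynomial (Fin n) C) :=
  (MvPolynomial.renameEquiv C (finRotate (n + 1))).trans (MvPolynomial.finSuccEquiv C n)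

/-!
Assign to the variable `x_i` the weight `K ^ (n + 1 - i)`. On exponent vectors with entries below
`K` the total weight is the value of the vector read as a base-`K` numeral, so it increases strictly
along the lexicographic order. The change of variables `x_i ↦ x_i + x_{n+1} ^ K ^ (n + 1 - i)`
turns each `x_i` into a monic polynomial in `x_{n+1}` whose degree is that weight. Hence the
lexicographically largest monomial of `f` becomes monic in `x_{n+1}` and strictly dominates in
degree the images of all the others.
-/

section PositionalWeight

variable {K n : ℕ} {d e : Fin n → ℕ}

theorem sum_mul_pow_rev_lt_pow (he : ∀ i, e i < K) :
    ∑ i, e i * K ^ (i.rev : ℕ) < K ^ n := by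
  have hval := finFunctionFinEquiv_apply fun i => (⟨e i.rev, he i.rev⟩ : Fin K)
  rw [← Equiv.sum_comp Fin.revPerm]
  simpa only [hval, Fin.revPerm_apply, Fin.rev_rev] using
    (finFunctionFinEquiv fun i => (⟨e i.rev, he i.rev⟩ : Fin K)).isLt

theorem sum_mul_pow_rev_lt_of_toLex_lt (he : ∀ i, e i < K) (hlex : toLex e < toLex d) :
    ∑ i, e i * K ^ (i.rev : ℕ) < ∑ i, d i * K ^ (i.rev : ℕ) := by
  obtain ⟨m, heq, hlt⟩ := hlex
  induction n with
  | zero => exact m.elim0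
  | succ n ih =>
    simp only [Fin.sum_univ_succ, Fin.rev_zero, Fin.val_last, Fin.rev_succ, Fin.val_castSucc]
    cases m using Fin.cases with
    | zero =>
      calc e 0 * K ^ n + ∑ i : Fin n, e i.succ * K ^ (i.rev : ℕ)
          < e 0 * K ^ n + K ^ n := by grw [sum_mul_pow_rev_lt_pow fun i => he i.succ]
        _ = (e 0 + 1) * K ^ n := (Nat.succ_mul _ _).symm
        _ ≤ d 0 * K ^ n := Nat.mul_le_mul_right _ hlt
        _ ≤ _ := Nat.le_add_right _ _
    | succ m =>
      have hzero : e 0 = d 0 := heq 0 m.succ_pos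
      rw [hzero]
      gcongr 1
      exact ih (fun i => he i.succ) m (fun j hj => heq j.succ (Fin.succ_lt_succ_iff.2 hj)) hlt

theorem weight_pow_rev_lt_of_toLex_lt {d e : Fin n →₀ ℕ} (he : ∀ i, e i < K)
    (hlex : toLex e < toLex d) :
    Finsupp.weight (fun i : Fin n => K ^ (i.rev : ℕ)) e <
      Finsupp.weight (fun i : Fin n => K ^ (i.rev : ℕ)) d := by
  have hsum (c : Fin n →₀ ℕ) :
      Finsupp.weight (fun i : Fin n => K ^ (i.rev : ℕ)) c = ∑ i, c i * K ^ (i.rev : ℕ) := by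
    simp [Finsupp.weight_apply, Finsupp.sum_fintype]
  rw [hsum, hsum]
  exact sum_mul_pow_rev_lt_of_toLex_lt (d := d) he hlex

end PositionalWeight

section MonicSubstitution

variable {σ R S : Type*} [CommSemiring S] {g : σ → Polynomial S}

theorem monic_finsuppProd_pow (hg : ∀ i, (g i).Monic) (e : σ →₀ ℕ) :
    (e.prod fun i k => g i ^ k).Monic :=
  Polynomial.monic_prod_of_monic _ _ fun i _ => (hg i).pow (e i)

theorem natDegree_finsuppProd_pow (hg : ∀ i, (g i).Monic) (e : σ →₀ ℕ) :
    (e.prod fun i k => g i ^ k).natDegree = Finsupp.weight (fun i => (g i).natDegree) e := by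
  rw [Finsupp.prod, Polynomial.natDegree_prod_of_monic _ _ fun i _ => (hg i).pow (e i),
    Finsupp.weight_apply, Finsupp.sum]
  exact Finset.sum_congr rfl fun i _ => (hg i).natDegree_pow (e i)

theorem monic_aeval_of_weight_lt [CommSemiring R] [Algebra R S] {f : MvPolynomial σ R}
    {d : σ →₀ ℕ} (hg : ∀ i, (g i).Monic) (hd : f.coeff d = 1)
    (hlt : ∀ e ∈ f.support, e ≠ d →
      Finsupp.weight (fun i => (g i).natDegree) e < Finsupp.weight (fun i => (g i).natDegree) d) :
    (MvPolynomial.aeval g f).Monic := by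
  classical
  nontriviality S
  have : Nontrivial R := (algebraMap R S).domain_nontrivial
  let G (e : σ →₀ ℕ) : Polynomial S := e.prod fun i k => g i ^ k
  have hdeg (e : σ →₀ ℕ) : (G e).degree = (Finsupp.weight (fun i => (g i).natDegree) e : ℕ) := by
    rw [Polynomial.degree_eq_natDegree (monic_finsuppProd_pow hg e).ne_zero,
      natDegree_finsuppProd_pow hg]
  have hd_mem : d ∈ f.support := by simp [hd]
  have hsplit : MvPolynomial.aeval g f = G d + ∑ e ∈ f.support.erase d, f.coeff e • G e := by
    rw [f.aeval_def, MvPolynomial.eval₂_eq, ← Finset.add_sum_erase _ _ hd_mem, hd, map_one, one_mul]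
    simp only [G, Algebra.smul_def, Finsupp.prod]
  rw [hsplit]
  refine (monic_finsuppProd_pow hg d).add_of_left ?_
  refine (Polynomial.degree_sum_le _ _).trans_lt ?_
  rw [hdeg d, Finset.sup_lt_iff (WithBot.bot_lt_coe _)]
  intro e he
  obtain ⟨hne, he_mem⟩ := Finset.mem_erase.1 he
  calc (f.coeff e • G e).degree
      ≤ (G e).degree := Polynomial.degree_smul_le _ _
    _ = (Finsupp.weight (fun i => (g i).natDegree) e : ℕ) := hdeg e
    _ < _ := Nat.cast_lt.2 (hlt e he_mem hne)

end MonicSubstitution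

section Shear

variable {σ R : Type*} [DecidableEq σ]

section CommSemiring

variable [CommSemiring R]

/-- The substitution fixing the variable `X s` and translating every other variable `X i` by
`p i` evaluated at `X s`; the value `p s` is ignored. -/
noncomputable def shearHom (s : σ) (p : σ → Polynomial R) :
    MvPolynomial σ R →ₐ[R] MvPolynomial σ R :=
  MvPolynomial.aeval fun i =>
    if i = s then MvPolynomial.X s
    else MvPolynomial.X i + Polynomial.aeval (MvPolynomial.X s) (p i)

variable (s : σ) (p q : σ → Polynomial R)

theorem shearHom_X_self : shearHom s p (MvPolynomial.X s) = MvPolynomial.X s := by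
  simp [shearHom]

theorem shearHom_X_of_ne {s i : σ} (h : i ≠ s) :
    shearHom s p (MvPolynomial.X i) =
      MvPolynomial.X i + Polynomial.aeval (MvPolynomial.X s) (p i) := by
  simp [shearHom, h]

theorem shearHom_comp_shearHom :
    (shearHom s p).comp (shearHom s q) = shearHom s (p + q) := by
  ext1 i
  obtain rfl | h := eq_or_ne i s
  · simp only [AlgHom.comp_apply, shearHom_X_self]
  · simp only [AlgHom.comp_apply, shearHom_X_of_ne _ h, map_add, ← Polynomial.aeval_algHom_apply,
      shearHom_X_self, Pi.add_apply, add_assoc]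

theorem shearHom_zero : shearHom s (0 : σ → Polynomial R) = AlgHom.id R _ := by
  ext1 i
  obtain rfl | h := eq_or_ne i s
  · exact shearHom_X_self i 0
  · simp [shearHom_X_of_ne _ h]

end CommSemiring

/-- `shearHom s p` as an automorphism of the polynomial ring, with inverse `shearHom s (-p)`. -/
noncomputable def shearEquiv [CommRing R] (s : σ) (p : σ → Polynomial R) :
    MvPolynomial σ R ≃ₐ[R] MvPolynomial σ R :=
  AlgEquiv.ofAlgHom (shearHom s p) (shearHom s (-p))
    (by rw [shearHom_comp_shearHom, add_neg_cancel, shearHom_zero])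
    (by rw [shearHom_comp_shearHom, neg_add_cancel, shearHom_zero])

end Shear

section LexShear

variable {R : Type*} [CommRing R] {n : ℕ}

theorem asPolyInLast_X_last :
    asPolyInLast R n (MvPolynomial.X (Fin.last n)) = Polynomial.X := by
  simp [asPolyInLast, MvPolynomial.finSuccEquiv_X_zero]

theorem asPolyInLast_X_castSucc (i : Fin n) :
    asPolyInLast R n (MvPolynomial.X i.castSucc) = Polynomial.C (MvPolynomial.X i) := by
  simp [asPolyInLast, MvPolynomial.finSuccEquiv_X_succ]

/-- The change of variables `x_i ↦ x_i + x_{n+1}^{K^{n+1-i}}` for `i ≤ n`, `x_{n+1} ↦ x_{n+1}`.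
With indices starting at `0`, the exponent of `K` is the value of `i.rev`. -/
noncomputable def lexShear (R : Type*) [CommRing R] (n K : ℕ) :
    MvPolynomial (Fin (n + 1)) R ≃ₐ[R] MvPolynomial (Fin (n + 1)) R :=
  shearEquiv (Fin.last n) fun i => Polynomial.X ^ K ^ (i.rev : ℕ)

theorem asPolyInLast_lexShear_X_last (K : ℕ) :
    asPolyInLast R n (lexShear R n K (MvPolynomial.X (Fin.last n))) = Polynomial.X :=
  (congrArg _ (shearHom_X_self _ _)).trans asPolyInLast_X_last

theorem asPolyInLast_lexShear_X_castSucc (K : ℕ) (i : Fin n) :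
    asPolyInLast R n (lexShear R n K (MvPolynomial.X i.castSucc)) =
      Polynomial.X ^ K ^ (i.castSucc.rev : ℕ) + Polynomial.C (MvPolynomial.X i) := by
  rw [lexShear, shearEquiv, AlgEquiv.ofAlgHom_apply, shearHom_X_of_ne _ i.castSucc_ne_last, map_add,
    asPolyInLast_X_castSucc, Polynomial.aeval_X_pow, map_pow, asPolyInLast_X_last, add_comm]

theorem monic_asPolyInLast_lexShear_X {K : ℕ} (hK : K ≠ 0) (i : Fin (n + 1)) :
    (asPolyInLast R n (lexShear R n K (MvPolynomial.X i))).Monic := by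
  cases i using Fin.lastCases with
  | last => rw [asPolyInLast_lexShear_X_last]; exact Polynomial.monic_X
  | cast i =>
    rw [asPolyInLast_lexShear_X_castSucc]
    exact Polynomial.monic_X_pow_add_C _ (pow_ne_zero _ hK)

theorem natDegree_asPolyInLast_lexShear_X [Nontrivial R] (K : ℕ) (i : Fin (n + 1)) :
    (asPolyInLast R n (lexShear R n K (MvPolynomial.X i))).natDegree = K ^ (i.rev : ℕ) := by
  cases i using Fin.lastCases with
  | last => simp [asPolyInLast_lexShear_X_last]
  | cast i => rw [asPolyInLast_lexShear_X_castSucc, Polynomial.natDegree_X_pow_add_C]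

theorem LexMonic.monic_asPolyInLast_lexShear {f : MvPolynomial (Fin (n + 1)) R} {K : ℕ}
    (hf : LexMonic f) (hK : ∀ i, f.degreeOf i < K) :
    (asPolyInLast R n (lexShear R n K f)).Monic := by
  nontriviality R
  obtain ⟨d, hd, hlarger⟩ := hf
  let ψ := (asPolyInLast R n).toAlgHom.comp (lexShear R n K).toAlgHom
  have hψ : asPolyInLast R n (lexShear R n K f) = MvPolynomial.aeval (ψ ∘ MvPolynomial.X) f :=
    DFunLike.congr_fun (MvPolynomial.aeval_unique ψ) f
  have hdeg : (fun i => ((ψ ∘ MvPolynomial.X) i).natDegree) = fun i => K ^ (i.rev : ℕ) :=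
    funext (natDegree_asPolyInLast_lexShear_X K)
  rw [hψ]
  refine monic_aeval_of_weight_lt (monic_asPolyInLast_lexShear_X (Nat.ne_zero_of_lt (hK 0))) hd ?_
  intro e he hne
  have hlex : toLex e < toLex d :=
    lt_of_le_of_ne (not_lt.1 fun h => MvPolynomial.mem_support_iff.1 he (hlarger e h))
      (toLex_inj.not.2 hne)
  rw [hdeg]
  exact weight_pow_rev_lt_of_toLex_lt
    (fun i => (MvPolynomial.monomial_le_degreeOf i he).trans_lt (hK i)) hlex

end LexShear

/-- Normalisation: for a lexicographically monic `f ∈ C[x_1,…,x_{n+1}]` there is an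
invertible change of variables (a `C`-algebra automorphism of the polynomial ring)
after which `f`, regarded as a polynomial in the last variable with coefficients in
`C[x_1,…,x_n]`, is monic. -/
theorem lexMonic_becomes_monic_after_change_of_variables
    (C : Type*) [CommRing C] (n : ℕ)
    (f : MvPolynomial (Fin (n + 1)) C) (hf : LexMonic f) :
    ∃ φ : MvPolynomial (Fin (n + 1)) C ≃ₐ[C] MvPolynomial (Fin (n + 1)) C,
      (asPolyInLast C n (φ f)).Monic := by
  have hK (i : Fin (n + 1)) : f.degreeOf i < f.totalDegree + 1 :=
    Nat.lt_succ_of_le (f.degreeOf_le_totalDegree i)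
  exact ⟨lexShear C n (f.totalDegree + 1), hf.monic_asPolyInLast_lexShear hK⟩
end

section
/- Let C be a commutative Noetherian ring, A = C[x_1,…,x_n], and I an ideal of A with height hgt_A(I) ≥ dim(C) + 1. Then I contains a lexicographically monic polynomial. -/
/-- The height of an ideal: the infimum of heights of primes containing it. -/
noncomputable def idealHeight {A : Type*} [CommRing A] (I : Ideal A) : ℕ∞ :=
  ⨅ (P : PrimeSpectrum A) (_ : I ≤ P.asIdeal), Order.height P

/-!
For an ideal `J` of `R[X]` with `R` Noetherian, the ideal of leading coefficients satisfies
`ht J ≤ ht (lc J)` (Suslin). Indeed, a prime `q ⊇ lc J` admits a prime `P ⊇ J` with `lc P ⊆ q`. As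
`P ∩ R ⊆ lc P ⊆ q`, either `P ∩ R ⊊ q`, and `ht P ≤ ht (P ∩ R) + 1 ≤ ht q`, or `P ∩ R = lc P = q`,
and then `P = qR[X]` has the height of `q`.

Viewing `C[x_1,…,x_n]` as polynomials in `x_1` over `C[x_2,…,x_n]` and taking leading coefficients
repeatedly, we reach an ideal of `C` of height greater than `dim C`, that is, the unit ideal. Going
back up, a polynomial whose leading coefficient in `x_1` is lexicographically monic is itself
lexicographically monic.
-/

open Polynomial

section LeadingCoeff

variable {R : Type*} [CommRing R]

/-- The polynomials whose leading coefficient lies outside the prime ideal `q`. Although `R` need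
not be a domain, they form a submonoid: two leading coefficients outside `q` have a nonzero product,
so leading coefficients multiply. -/
def leadingCoeffCompl (q : Ideal R) [hq : q.IsPrime] : Submonoid R[X] where
  carrier := {f | f.leadingCoeff ∉ q}
  one_mem' := by
    have : Nontrivial R := nontrivial_of_ne 0 1 fun h ↦ hq.one_notMem (h ▸ q.zero_mem)
    simpa using hq.one_notMem
  mul_mem' {f g} hf hg := by
    have hfg : f.leadingCoeff * g.leadingCoeff ∉ q := fun h ↦ (hq.mem_or_mem h).elim hf hg
    rwa [Set.mem_ofPred_eq, leadingCoeff_mul' fun h ↦ hfg (h ▸ q.zero_mem)]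

lemma disjoint_leadingCoeffCompl_iff {I : Ideal R[X]} {q : Ideal R} [q.IsPrime] :
    Disjoint (I : Set R[X]) (leadingCoeffCompl q) ↔ I.leadingCoeff ≤ q := by
  rw [Set.disjoint_left]
  constructor
  · intro h a ha
    obtain ⟨f, hf, rfl⟩ := (I.mem_leadingCoeff a).1 ha
    exact not_not.1 (h hf)
  · exact fun h f hf ↦ not_not.2 (h ((I.mem_leadingCoeff _).2 ⟨f, hf, rfl⟩))

lemma exists_isPrime_ge_leadingCoeff_le {I : Ideal R[X]} {q : Ideal R} [q.IsPrime]
    (h : I.leadingCoeff ≤ q) :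
    ∃ P : Ideal R[X], P.IsPrime ∧ I ≤ P ∧ P.leadingCoeff ≤ q := by
  obtain ⟨P, hP, hIP, hPq⟩ :=
    I.exists_le_prime_disjoint (leadingCoeffCompl q) (disjoint_leadingCoeffCompl_iff.2 h)
  exact ⟨P, hP, hIP, disjoint_leadingCoeffCompl_iff.1 hPq⟩

lemma under_le_leadingCoeff (I : Ideal R[X]) : I.under R ≤ I.leadingCoeff :=
  fun a ha ↦ (I.mem_leadingCoeff a).2 ⟨C a, ha, leadingCoeff_C a⟩

end LeadingCoeff

section Height

variable {R : Type*} [CommRing R]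

lemma idealHeight_eq_height (I : Ideal R) : idealHeight I = I.height := by
  refine le_antisymm ?_ (le_iInf₂ fun P hIP ↦ ?_)
  · rw [Ideal.height_eq_inf_minimalPrimes]
    refine le_iInf₂ fun P hP ↦ ?_
    have hPprime : P.IsPrime := hP.isPrime
    have hheight := PrimeSpectrum.height_eq_orderHeight ⟨P, hPprime⟩
    exact (iInf₂_le (⟨P, hPprime⟩ : PrimeSpectrum R) hP.1.2).trans_eq hheight.symm
  · rw [← PrimeSpectrum.height_eq_orderHeight]
    exact Ideal.height_mono hIP

lemma eq_top_of_ringKrullDim_add_one_le_height {I : Ideal R} [I.FiniteHeight]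
    (h : ringKrullDim R + 1 ≤ I.height) : I = ⊤ := by
  by_contra hI
  have hlt : (I.height : WithBot ℕ∞) < I.height + 1 :=
    mod_cast (ENat.lt_add_one_iff (Ideal.height_ne_top hI)).2 le_rfl
  exact hlt.not_ge ((add_le_add_left (Ideal.height_le_ringKrullDim_of_ne_top hI) 1).trans h)

variable [IsNoetherianRing R]

lemma height_map_C_of_isPrime (p : Ideal R) [p.IsPrime] : (p.map C).height = p.height := by
  have : (p.map C).LiesOver p :=
    ⟨Ideal.le_comap_map.antisymm ((under_le_leadingCoeff _).trans_eq p.map_C_leadingCoeff)⟩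
  simp [Ideal.height_eq_height_add_of_liesOver_of_hasGoingDown p]

attribute [local instance] Polynomial.algebra Polynomial.isLocalization in
lemma height_le_height_under_add_one (P : Ideal R[X]) [P.IsPrime] :
    P.height ≤ (P.under R).height + 1 := by
  let p := P.under R
  let Rₚ := Localization.AtPrime p
  have hdisj : Disjoint (p.primeCompl.map C : Set R[X]) P := by
    rw [Set.disjoint_left]
    rintro _ ⟨a, ha, rfl⟩
    exact ha
  have hP' : (P.map (algebraMap R[X] Rₚ[X])).IsPrime :=
    IsLocalization.isPrime_of_isPrime_disjoint _ _ P ‹_› hdisj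
  suffices h : (P.height : WithBot ℕ∞) ≤ p.height + 1 from mod_cast h
  calc (P.height : WithBot ℕ∞)
      = (P.map (algebraMap R[X] Rₚ[X])).height := by
        rw [IsLocalization.height_map_of_disjoint _ P hdisj]
    _ ≤ ringKrullDim Rₚ[X] := Ideal.height_le_ringKrullDim_of_isPrime
    _ = ringKrullDim Rₚ + 1 := ringKrullDim_of_isNoetherianRing
    _ = p.height + 1 := by rw [IsLocalization.AtPrime.ringKrullDim_eq_height p]

lemma height_le_of_leadingCoeff_le {P : Ideal R[X]} [P.IsPrime] {q : Ideal R} [q.IsPrime]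
    (h : P.leadingCoeff ≤ q) : P.height ≤ q.height := by
  have hle : P.under R ≤ P.leadingCoeff := under_le_leadingCoeff P
  rcases (hle.trans h).eq_or_lt with heq | hlt
  · have hP : (P.under R).map C = P :=
      P.map_C_comap_of_comap_eq_leadingCoeff (hle.antisymm (h.trans_eq heq.symm))
    calc P.height
        = ((P.under R).map C).height := by rw [hP]
      _ = (P.under R).height := height_map_C_of_isPrime _
      _ ≤ q.height := by rw [heq]
  · exact (height_le_height_under_add_one P).trans (Ideal.height_add_one_le_of_lt_of_isPrime hlt)

theorem height_le_height_leadingCoeff (I : Ideal R[X]) : I.height ≤ I.leadingCoeff.height := by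
  rw [I.leadingCoeff.height_eq_inf_minimalPrimes]
  refine le_iInf₂ fun q hq ↦ ?_
  have hqprime : q.IsPrime := hq.isPrime
  obtain ⟨P, hP, hIP, hPq⟩ := exists_isPrime_ge_leadingCoeff_le hq.1.2
  exact (Ideal.height_mono hIP).trans (height_le_of_leadingCoeff_le hPq)

end Height

section LexMonic

lemma toLex_cons_lt_toLex_cons_iff {M : Type*} [Zero M] [LT M] {n : ℕ} {i j : M}
    {s t : Fin n →₀ M} :
    toLex (s.cons i) < toLex (t.cons j) ↔ i < j ∨ i = j ∧ toLex s < toLex t :=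
  Fin.pi_lex_lt_cons_cons (x := s) (y := t) (α := fun _ ↦ M) fun {_} a b ↦ a < b

variable {A : Type*} [CommRing A]

lemma LexMonic.one (n : ℕ) : LexMonic (1 : MvPolynomial (Fin n) A) := by
  refine ⟨0, MvPolynomial.coeff_zero_one, fun e he ↦ ?_⟩
  rw [MvPolynomial.coeff_one, if_neg]
  rintro rfl
  exact he.false

lemma LexMonic.of_leadingCoeff_finSuccEquiv {n : ℕ} {f : MvPolynomial (Fin (n + 1)) A}
    (hf : LexMonic (MvPolynomial.finSuccEquiv A n f).leadingCoeff) : LexMonic f := by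
  obtain ⟨d, hd, hlt⟩ := hf
  refine ⟨d.cons (MvPolynomial.finSuccEquiv A n f).natDegree, ?_, fun e he ↦ ?_⟩
  · rwa [← MvPolynomial.finSuccEquiv_coeff_coeff]
  · rw [← e.cons_tail, toLex_cons_lt_toLex_cons_iff] at he
    rw [← e.cons_tail, ← MvPolynomial.finSuccEquiv_coeff_coeff]
    rcases he with hdeg | ⟨hdeg, htail⟩
    · rw [coeff_eq_zero_of_natDegree_lt hdeg, MvPolynomial.coeff_zero]
    · rw [← hdeg]
      exact hlt _ htail

end LexMonic

/-- An ideal of `C[x_1,…,x_n]` of height at least `dim C + 1` contains a lexicographically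
monic polynomial. -/
theorem exists_lexMonic_of_height_ge
    (C : Type*) [CommRing C] [IsNoetherianRing C] (n : ℕ)
    (I : Ideal (MvPolynomial (Fin n) C))
    (hI : ringKrullDim C + 1 ≤ (idealHeight I : WithBot ℕ∞)) :
    ∃ f ∈ I, LexMonic f := by
  rw [idealHeight_eq_height] at hI
  induction n with
  | zero =>
    rw [← ringKrullDim_eq_of_ringEquiv (MvPolynomial.isEmptyRingEquiv C (Fin 0))] at hI
    rw [eq_top_of_ringKrullDim_add_one_le_height hI]
    exact ⟨1, Submodule.mem_top, .one 0⟩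
  | succ n ih =>
    let e : MvPolynomial (Fin (n + 1)) C ≃+* (MvPolynomial (Fin n) C)[X] :=
      (MvPolynomial.finSuccEquiv C n).toRingEquiv
    have hheight : I.height ≤ (I.map e).leadingCoeff.height :=
      (e.height_map I).symm.trans_le (height_le_height_leadingCoeff _)
    obtain ⟨g, hg, hgmonic⟩ := ih _ (hI.trans (WithBot.coe_le_coe.2 hheight))
    obtain ⟨F, hF, rfl⟩ := ((I.map e).mem_leadingCoeff g).1 hg
    obtain ⟨f, hf, rfl⟩ := (Ideal.mem_map_of_equiv e F).1 hF
    exact ⟨f, hf, .of_leadingCoeff_finSuccEquiv hgmonic⟩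
end

section
/- Let R be a commutative ring and r ≥ 2. Let b^+ = (b_1,…,b_r)^t ∈ R^r be a unimodular column and let b^− = (b_{−r},…,b_{−1})^t ∈ R^r be a column such that Σ_{i=1}^r b_i b_{−i} = 0. Then there exists a matrix M ∈ Θ(r,R) such that b^− = M b^+. -/
open Matrix

/-- `Θ(r,R)`: `r × r` matrices that are antisymmetric with respect to the antidiagonal
and have zeroes on the antidiagonal. -/
def Theta (r : ℕ) (R : Type*) [CommRing R] : Set (Matrix (Fin r) (Fin r) R) :=
  {M | (∀ i j : Fin r, M ⟨r - 1 - j.val, by omega⟩ ⟨r - 1 - i.val, by omega⟩ = - M i j) ∧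
    ∀ i : Fin r, M i ⟨r - 1 - i.val, by omega⟩ = 0}

/-!
Reversing the order of the rows turns `Θ(r,R)` into the alternating matrices and the hypothesis on
`b⁻` into `v ⬝ᵥ w = 0`, where `v = b⁺` and `w` is `b⁻` reversed. If `c ⬝ᵥ v = 1`, the alternating
matrix `w cᵗ - c wᵗ` sends `v` to `(c ⬝ᵥ v) w - (w ⬝ᵥ v) c = w`.
-/

/-- The matrix `x yᵗ - y xᵗ` of the bivector `x ∧ y`; it is alternating, i.e. antisymmetric with
zero diagonal, and supplies the solution of `A v = w`. -/
def wedgeMatrix {n R : Type*} [CommRing R] (x y : n → R) : Matrix n n R :=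
  vecMulVec x y - vecMulVec y x

section wedgeMatrix

variable {n R : Type*} [CommRing R]

theorem transpose_wedgeMatrix (x y : n → R) : (wedgeMatrix x y)ᵀ = -wedgeMatrix x y := by
  simp only [wedgeMatrix, transpose_sub, transpose_vecMulVec, neg_sub]

theorem diag_wedgeMatrix (x y : n → R) : (wedgeMatrix x y).diag = 0 := by
  simp only [wedgeMatrix, diag_sub, diag_vecMulVec, mul_comm y x, sub_self]

theorem wedgeMatrix_mulVec [Fintype n] (x y v : n → R) :
    wedgeMatrix x y *ᵥ v = (y ⬝ᵥ v) • x - (x ⬝ᵥ v) • y := by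
  simp only [wedgeMatrix, sub_mulVec, vecMulVec_mulVec, op_smul_eq_smul]

theorem exists_alternating_mulVec_eq [Fintype n] {v w : n → R}
    (hv : Ideal.span (Set.range v) = ⊤) (hvw : v ⬝ᵥ w = 0) :
    ∃ A : Matrix n n R, Aᵀ = -A ∧ A.diag = 0 ∧ A *ᵥ v = w := by
  obtain ⟨c, hc⟩ : ∃ c : n → R, c ⬝ᵥ v = 1 :=
    Ideal.mem_span_range_iff_exists_fun.1 ((Ideal.eq_top_iff_one _).1 hv)
  refine ⟨wedgeMatrix w c, transpose_wedgeMatrix w c, diag_wedgeMatrix w c, ?_⟩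
  rw [wedgeMatrix_mulVec, hc, dotProduct_comm w v, hvw, one_smul, zero_smul, sub_zero]

end wedgeMatrix

theorem mk_sub_one_sub_eq_rev {r : ℕ} (i : Fin r) (h : r - 1 - i.val < r) :
    (⟨r - 1 - i.val, h⟩ : Fin r) = i.rev :=
  Fin.ext (by simp only [Fin.val_rev]; omega)

theorem mem_theta_iff_rev {r : ℕ} {R : Type*} [CommRing R] {M : Matrix (Fin r) (Fin r) R} :
    M ∈ Theta r R ↔ (∀ i j, M j.rev i.rev = -M i j) ∧ ∀ i, M i i.rev = 0 := by
  simp only [Theta, Set.mem_ofPred_eq, mk_sub_one_sub_eq_rev]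

theorem submatrix_rev_mem_theta {r : ℕ} {R : Type*} [CommRing R] {A : Matrix (Fin r) (Fin r) R}
    (hA : Aᵀ = -A) (hdiag : A.diag = 0) : A.submatrix Fin.rev id ∈ Theta r R := by
  refine mem_theta_iff_rev.2 ⟨fun i j => ?_, fun i => congrFun hdiag i.rev⟩
  simpa only [submatrix_apply, id, Fin.rev_rev, transpose_apply, Matrix.neg_apply] using
    congrFun₂ hA i.rev j

/-- If `b⁺ = (b_1,…,b_r)ᵗ` is unimodular and `b⁻ = (b_{-r},…,b_{-1})ᵗ` satisfies
`∑ b_i b_{-i} = 0`, then `b⁻ = M b⁺` for some `M ∈ Θ(r,R)`. -/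
theorem exists_theta_of_unimodular
    (R : Type*) [CommRing R] (r : ℕ) (hr : 2 ≤ r)
    (bp bm : Fin r → R)
    (hu : Ideal.span (Set.range bp) = ⊤)
    (hiso : ∑ i : Fin r, bp i * bm ⟨r - 1 - i.val, by omega⟩ = 0) :
    ∃ M ∈ Theta r R, M.mulVec bp = bm := by
  have hdot : bp ⬝ᵥ (bm ∘ Fin.rev) = 0 := by
    simpa only [dotProduct, Function.comp_apply, mk_sub_one_sub_eq_rev] using hiso
  obtain ⟨A, hA, hdiag, hmul⟩ := exists_alternating_mulVec_eq hu hdot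
  refine ⟨A.submatrix Fin.rev id, submatrix_rev_mem_theta hA hdiag, ?_⟩
  calc A.submatrix Fin.rev id *ᵥ bp = (A *ᵥ bp) ∘ Fin.rev := rfl
    _ = (bm ∘ Fin.rev) ∘ Fin.rev := by rw [hmul]
    _ = bm := by rw [Function.comp_assoc, Fin.rev_involutive.comp_self, Function.comp_id]
end

section
/- Let R be a commutative Noetherian ring, s ∈ R, and r ≥ 2. Then there exists k ∈ ℕ such that for every column b^+ = (b_1,…,b_r)^t ∈ R^r with s ∈ ⟨b_1,…,b_r⟩ and every column b^− = (b_{−r},…,b_{−1})^t ∈ R^r such that Σ_{i=1}^r b_i b_{−i} = 0 and every entry of b^− is divisible by s^k, there exists a matrix M ∈ Θ(r,R) with b^− = M b^+. -/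
open Matrix

/-!
Write `J` for the order-reversing permutation of the indices. If `a ⬝ᵥ b = s` and `b ⬝ᵥ J c = 0`,
then the rank one matrix `c aᵀ` minus its antitranspose `(J a) (J c)ᵀ` sends `b` to
`(a ⬝ᵥ b) c - (J c ⬝ᵥ b) J a = s c`. It remains to write `b⁻ = s c` with `b⁺ ⬝ᵥ J c = 0`.
If `b⁻ = s ^ (k + 1) d`, then `b⁺ ⬝ᵥ J b⁻ = 0` says that `b⁺ ⬝ᵥ J d` is killed by `s ^ (k + 1)`.
The annihilators of the powers of `s` stabilize in a Noetherian ring, so for a suitable `k` it is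
already killed by `s ^ k`, and `c = s ^ k d` works.
-/

theorem exists_pow_smul_eq_zero_of_pow_succ_smul_eq_zero {R : Type*} (M : Type*) [CommSemiring R]
    [AddCommMonoid M] [Module R M] [IsNoetherian R M] (s : R) :
    ∃ k : ℕ, ∀ x : M, s ^ (k + 1) • x = 0 → s ^ k • x = 0 := by
  obtain ⟨k, ker_stabilizes⟩ := monotone_stabilizes_iff_noetherian.mpr ‹IsNoetherian R M›
    (algebraMap R (Module.End R M) s).iterateKer
  refine ⟨k, fun x hx ↦ ?_⟩
  have ker_eq := SetLike.ext_iff.mp (ker_stabilizes (k + 1) k.le_succ) x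
  simp only [LinearMap.iterateKer_coe, ← map_pow, LinearMap.mem_ker,
    Module.algebraMap_end_apply] at ker_eq
  exact ker_eq.mpr hx

/-- The transpose of a matrix with respect to the antidiagonal, written `M^⊤` in the definition of
`Θ(r,R)`: the usual transpose after reversing the order of the rows and of the columns. -/
def antitranspose {m n : ℕ} {α : Type*} (A : Matrix (Fin m) (Fin n) α) :
    Matrix (Fin n) (Fin m) α :=
  (A.submatrix Fin.rev Fin.rev)ᵀ

theorem antitranspose_apply {m n : ℕ} {α : Type*} (A : Matrix (Fin m) (Fin n) α)
    (i : Fin n) (j : Fin m) : antitranspose A i j = A j.rev i.rev :=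
  rfl

theorem antitranspose_vecMulVec {m n : ℕ} {α : Type*} [CommMagma α] (u : Fin m → α)
    (v : Fin n → α) :
    antitranspose (vecMulVec u v) = vecMulVec (v ∘ Fin.rev) (u ∘ Fin.rev) :=
  transpose_vecMulVec (u ∘ Fin.rev) (v ∘ Fin.rev)

section Theta

variable {R : Type*} [CommRing R] {r : ℕ}

theorem mem_Theta_iff {M : Matrix (Fin r) (Fin r) R} :
    M ∈ Theta r R ↔ (∀ i j, M j.rev i.rev = -M i j) ∧ ∀ i, M i i.rev = 0 := by
  simp only [Theta, Set.mem_ofPred_eq, mk_sub_one_sub_eq_rev]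

theorem sub_antitranspose_mem_Theta (A : Matrix (Fin r) (Fin r) R) :
    A - antitranspose A ∈ Theta r R := by
  simp [mem_Theta_iff, antitranspose_apply]

theorem exists_mem_Theta_mulVec_eq_smul {s : R} {b c : Fin r → R}
    (hs : s ∈ Ideal.span (Set.range b)) (hc : b ⬝ᵥ (c ∘ Fin.rev) = 0) :
    ∃ M ∈ Theta r R, M *ᵥ b = s • c := by
  obtain ⟨a, ha : a ⬝ᵥ b = s⟩ := Ideal.mem_span_range_iff_exists_fun.mp hs
  refine ⟨_, sub_antitranspose_mem_Theta (vecMulVec c a), ?_⟩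
  calc (vecMulVec c a - antitranspose (vecMulVec c a)) *ᵥ b
      = (a ⬝ᵥ b) • c - ((c ∘ Fin.rev) ⬝ᵥ b) • (a ∘ Fin.rev) := by
        simp only [antitranspose_vecMulVec, sub_mulVec, vecMulVec_mulVec, op_smul_eq_smul]
    _ = s • c := by rw [ha, dotProduct_comm _ b, hc, zero_smul, sub_zero]

theorem exists_theta_of_divisible_general {s : R} {k : ℕ}
    (hk : ∀ x : R, s ^ (k + 1) * x = 0 → s ^ k * x = 0) {bp bm : Fin r → R}
    (hs : s ∈ Ideal.span (Set.range bp)) (horth : bp ⬝ᵥ (bm ∘ Fin.rev) = 0)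
    (hdvd : ∀ i, s ^ (k + 1) ∣ bm i) :
    ∃ M ∈ Theta r R, M *ᵥ bp = bm := by
  choose d hd using hdvd
  obtain rfl : bm = s ^ (k + 1) • d := funext hd
  have killed_by_pow_succ : s ^ (k + 1) * (bp ⬝ᵥ (d ∘ Fin.rev)) = 0 := by
    rwa [← smul_eq_mul, ← dotProduct_smul]
  have horth_pow : bp ⬝ᵥ ((s ^ k • d) ∘ Fin.rev) = 0 :=
    (dotProduct_smul (s ^ k) bp (d ∘ Fin.rev)).trans (hk _ killed_by_pow_succ)
  obtain ⟨M, hM, hMbp⟩ := exists_mem_Theta_mulVec_eq_smul hs horth_pow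
  exact ⟨M, hM, by rw [hMbp, smul_smul, pow_succ']⟩

end Theta

/-- Over a Noetherian ring: there is `k` (depending on `R`, `s`, `r`) such that whenever
`s ∈ ⟨b_1,…,b_r⟩`, `∑ b_i b_{-i} = 0` and all entries of `b⁻` are divisible by `s^k`,
one has `b⁻ = M b⁺` for some `M ∈ Θ(r,R)`. -/
theorem exists_theta_of_divisible
    (R : Type*) [CommRing R] [IsNoetherianRing R] (s : R) (r : ℕ) (hr : 2 ≤ r) :
    ∃ k : ℕ, ∀ bp bm : Fin r → R,
      s ∈ Ideal.span (Set.range bp) →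
      (∑ i : Fin r, bp i * bm ⟨r - 1 - i.val, by omega⟩) = 0 →
      (∀ i, s ^ k ∣ bm i) →
      ∃ M ∈ Theta r R, M.mulVec bp = bm := by
  obtain ⟨k, hk⟩ := exists_pow_smul_eq_zero_of_pow_succ_smul_eq_zero R s
  exact ⟨k + 1, fun bp bm hs horth ↦ exists_theta_of_divisible_general hk hs
    (by simpa only [dotProduct, Function.comp_apply, mk_sub_one_sub_eq_rev] using horth)⟩
end
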